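/- arXiv:1111.1011 — 2 statements merged into one kernel-verified Lean document; each statement's English description precedes it below -/
import Mathlib

section
/- Let M=(Q,Γ,Δ,q₀,γ₀) be a DCFS, k∈ℕ, and M' the switch-number-recording DCFS constructed from M and k. If c_init^{M'}→*c' in T(M'), then there is a run c_init^M→*c in T_{[0,k]}(M), where c is the configuration of M determined by: State(c)=State(c'); Active(c)=⊥ if Active(c')=⊥, and Active(c)=(w,i) if Active(c')=((w,i),i) with w∈Γ∪{ε} and i∈{0,…,k}; Idle(c)((w',j'))=Idle(c')(((w',j'),j')) for all w'∈Γ∪{ε} and j'∈{0,…,k+1}, and Idle(c) equals 0 on every other local configuration of M. -/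
namespace DCPSFormal

/-- Rules of a dynamic network of concurrent pushdown systems (DCPS):
creation rules `⟨q,γ⟩ → ⟨q',u⟩ ▷ α` (with `α = none` meaning `ε`),
interruption rules `⟨q,γ⟩ ↦ ⟨q',u⟩`, and resumption rules `q ↦ q' ◁ γ`. -/
inductive Rule (Q Γ : Type*) where
  | cr : Q → Γ → Q → List Γ → Option Γ → Rule Q Γ
  | intr : Q → Γ → Q → List Γ → Rule Q Γ
  | res : Q → Γ → Q → Rule Q Γ

/-- A DCPS: a set of rules, an initial state and an initial stack symbol. -/
structure DCPS (Q Γ : Type*) where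
  rules : Set (Rule Q Γ)
  q0 : Q
  γ0 : Γ

/-- Well-formedness of a DCPS: every pushed word has length at most 2. -/
def IsDCPSWf {Q Γ : Type*} (M : DCPS Q Γ) : Prop :=
  ∀ r ∈ M.rules,
    match r with
    | .cr _ _ _ u _ => u.length ≤ 2
    | .intr _ _ _ u => u.length ≤ 2
    | .res _ _ _ => True

/-- A DCFS is a DCPS in which every pushed word has length at most 1. -/
def IsDCFS {Q Γ : Type*} (M : DCPS Q Γ) : Prop :=
  ∀ r ∈ M.rules,
    match r with
    | .cr _ _ _ u _ => u.length ≤ 1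
    | .intr _ _ _ u => u.length ≤ 1
    | .res _ _ _ => True

/-- A configuration of a DCPS: global state, optional active local configuration
(stack content and switch number), and a finitely supported multiset of pending
local configurations. -/
structure Config (Q Γ : Type*) where
  state : Q
  active : Option (List Γ × ℕ)
  idle : (List Γ × ℕ) →₀ ℕ

/-- The thread possibly spawned by a creation rule with creation component `α`
when the active thread has switch number `i`. -/
noncomputable def spawnOf {Γ : Type*} (α : Option Γ) (i : ℕ) : (List Γ × ℕ) →₀ ℕ :=
  match α with
  | none => 0
  | some a => Finsupp.single ([a], i + 1) 1

/-- The transition system `T(M)` of a DCPS, with steps labelled by rules. -/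
inductive Step {Q Γ : Type*} (M : DCPS Q Γ) : Rule Q Γ → Config Q Γ → Config Q Γ → Prop
  | cr {q γ q' u α w i V} :
      Rule.cr q γ q' u α ∈ M.rules →
      Step M (.cr q γ q' u α) ⟨q, some (γ :: w, i), V⟩ ⟨q', some (u ++ w, i), V + spawnOf α i⟩
  | intr {q γ q' u w i V} :
      Rule.intr q γ q' u ∈ M.rules →
      Step M (.intr q γ q' u) ⟨q, some (γ :: w, i), V⟩
        ⟨q', none, V + Finsupp.single (u ++ w, i + 1) 1⟩
  | res {q γ q' w i V} :
      Rule.res q γ q' ∈ M.rules →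
      Step M (.res q γ q') ⟨q, none, V + Finsupp.single (γ :: w, i) 1⟩ ⟨q', some (γ :: w, i), V⟩

/-- `c ∈ Conf_I(M)`: the active thread exists and its switch number lies in `I`. -/
def ActiveIn {Q Γ : Type*} (I : Set ℕ) (c : Config Q Γ) : Prop :=
  ∃ w i, c.active = some (w, i) ∧ i ∈ I

/-- The `I`-bounded transition system `T_I(M)`. -/
def StepIn {Q Γ : Type*} (M : DCPS Q Γ) (I : Set ℕ) (r : Rule Q Γ) (c c' : Config Q Γ) : Prop :=
  Step M r c c' ∧ (ActiveIn I c ∨ ActiveIn I c')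

/-- Reachability in `T(M)`. -/
def Reaches {Q Γ : Type*} (M : DCPS Q Γ) : Config Q Γ → Config Q Γ → Prop :=
  Relation.ReflTransGen (fun a b => ∃ r, Step M r a b)

/-- Reachability in `T_I(M)`. -/
def ReachesIn {Q Γ : Type*} (M : DCPS Q Γ) (I : Set ℕ) : Config Q Γ → Config Q Γ → Prop :=
  Relation.ReflTransGen (fun a b => ∃ r, StepIn M I r a b)

/-- The initial configuration of a DCPS. -/
noncomputable def initConfig {Q Γ : Type*} (M : DCPS Q Γ) : Config Q Γ :=
  ⟨M.q0, none, Finsupp.single ([M.γ0], 0) 1⟩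

/-- `q` is reachable by `M`. -/
def StateReachable {Q Γ : Type*} (M : DCPS Q Γ) (q : Q) : Prop :=
  ∃ c, Reaches M (initConfig M) c ∧ c.active = none ∧ c.state = q

/-- `q` is `k`-bounded reachable by `M`. -/
def KBoundedReachable {Q Γ : Type*} (M : DCPS Q Γ) (k : ℕ) (q : Q) : Prop :=
  ∃ c, ReachesIn M {i | i ≤ k} (initConfig M) c ∧ c.active = none ∧ c.state = q

/-- `q` is `k`-stratified reachable by `M`. -/
def KStratifiedReachable {Q Γ : Type*} (M : DCPS Q Γ) (k : ℕ) (q : Q) : Prop :=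
  ∃ c : ℕ → Config Q Γ, c 0 = initConfig M ∧
    (∀ l ≤ k, ReachesIn M {l} (c l) (c (l + 1))) ∧
    (c (k + 1)).active = none ∧ (c (k + 1)).state = q

/-- A labelled run in a labelled transition system. -/
inductive LRun {C L : Type*} (step : L → C → C → Prop) : List L → C → C → Prop
  | nil (c) : LRun step [] c c
  | cons {l τ c c' c''} : step l c c' → LRun step τ c' c'' → LRun step (l :: τ) c c''

/-- A pushdown automaton with states `S`, input alphabet `A` and stack alphabet `Γ`. -/
structure PDA (S A Γ : Type*) where
  trans : Set ((S × Γ) × Option A × (S × List Γ))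
  p0 : S
  γ0 : Γ
  final : Set S

/-- A single (possibly `ε`-labelled) step of a PDA. -/
inductive PDAStep {S A Γ : Type*} (P : PDA S A Γ) :
    Option A → (S × List Γ) → (S × List Γ) → Prop
  | mk {p γ a p' u w} : ((p, γ), a, (p', u)) ∈ P.trans →
      PDAStep P a (p, γ :: w) (p', u ++ w)

/-- A run of a PDA labelled by the word obtained by concatenating all non-`ε` labels. -/
inductive PDATrace {S A Γ : Type*} (P : PDA S A Γ) :
    List A → (S × List Γ) → (S × List Γ) → Prop
  | nil (c) : PDATrace P [] c c
  | eps {v c c' c''} : PDAStep P none c c' → PDATrace P v c' c'' → PDATrace P v c c''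
  | cons {a v c c' c''} : PDAStep P (some a) c c' → PDATrace P v c' c'' →
      PDATrace P (a :: v) c c''

/-- The language of a PDA (acceptance by final state). -/
def PDALang {S A Γ : Type*} (P : PDA S A Γ) : Set (List A) :=
  { v | ∃ p w, p ∈ P.final ∧ PDATrace P v (P.p0, [P.γ0]) (p, w) }

/-- A finite state automaton. -/
structure FSA (S A : Type*) where
  trans : Set (S × Option A × S)
  init : Set S
  final : Set S

/-- A run of an FSA labelled by a word (`ε`-labels contribute nothing). -/
inductive FSARun {S A : Type*} (Au : FSA S A) : List A → S → S → Prop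
  | nil (s) : FSARun Au [] s s
  | eps {v s s' s''} : (s, none, s') ∈ Au.trans → FSARun Au v s' s'' → FSARun Au v s s''
  | cons {a v s s' s''} : (s, some a, s') ∈ Au.trans → FSARun Au v s' s'' →
      FSARun Au (a :: v) s s''

/-- The language of an FSA. -/
def FSALang {S A : Type*} (Au : FSA S A) : Set (List A) :=
  { v | ∃ s ∈ Au.init, ∃ s' ∈ Au.final, FSARun Au v s s' }

/-- A vector addition system with states of dimension `n`. -/
structure VASS (n : ℕ) (S A : Type*) where
  δ : S → A → S × (Fin n → ℤ)
  s0 : S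
  v0 : Fin n → ℕ

/-- A step of a VASS: `(q₁,u₁) →ᵃ (q₂,u₂)` iff `δ(q₁,a) = (q₂, u₂ - u₁)`. -/
def VStep {n : ℕ} {S A : Type*} (V : VASS n S A) (a : A) :
    (S × (Fin n → ℕ)) → (S × (Fin n → ℕ)) → Prop :=
  fun c c' => (V.δ c.1 a).1 = c'.1 ∧ ∀ i, (c'.2 i : ℤ) = (c.2 i : ℤ) + (V.δ c.1 a).2 i

/-- Reachability in the transition system of a VASS. -/
def VReaches {n : ℕ} {S A : Type*} (V : VASS n S A) :
    (S × (Fin n → ℕ)) → (S × (Fin n → ℕ)) → Prop :=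
  Relation.ReflTransGen (fun c c' => ∃ a, VStep V a c c')

/-- A state `s` is reachable by the VASS `V`. -/
def VStateReachable {n : ℕ} {S A : Type*} (V : VASS n S A) (s : S) : Prop :=
  ∃ u, VReaches V (V.s0, V.v0) (s, u)

/-- The `i`-th unit vector. -/
def unitVec {m : ℕ} (i : Fin m) : Fin m → ℤ := fun j => if j = i then 1 else 0

/-- The `i`-lift of a rule of a DCFS, used to build the switch-number-recording DCFS.
A stack symbol of the recording system is a pair `(w, i)` with `w ∈ Γ ∪ {ε}`
(modelled as `Option Γ`) and `i` a recorded switch number in `{0,…,k+1}`; the pushed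
word `u` of a DCFS rule (of length at most 1) is represented by `u.head? : Option Γ`. -/
def liftRule {Q Γ : Type*} (i : ℕ) : Rule Q Γ → Rule Q (Option Γ × ℕ)
  | .cr q γ q' u α => .cr q (some γ, i) q' [(u.head?, i)] (α.map fun a => (some a, i + 1))
  | .intr q γ q' u => .intr q (some γ, i) q' [(u.head?, i + 1)]
  | .res q γ q' => .res q (some γ, i) q'

/-- The switch-number-recording DCFS `M'` constructed from a DCFS `M` and `k`. -/
def recordDCFS {Q Γ : Type*} (M : DCPS Q Γ) (k : ℕ) : DCPS Q (Option Γ × ℕ) where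
  rules := { r' | ∃ i ≤ k, ∃ r ∈ M.rules, r' = liftRule i r }
  q0 := M.q0
  γ0 := (some M.γ0, 0)

/-! Every thread of `M'` reachable from the initial configuration has a single stack symbol
`(w, i)`, and the `i` recorded in that symbol is the switch number of the thread. Such a thread
carries the same information as the thread of `M` with stack `w` and switch number `i`, so a
configuration made of pairs `(w, i)` represents both a configuration of `M'` and one of `M`. A step
of `M'` between such configurations comes from the `i`-lift of a rule of `M`, and since only the
lifts with `i ≤ k` are available, the corresponding step of `M` has an active thread with switch
number at most `k`. -/

section Finsupp

variable {α β : Type*}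

theorem exists_of_mapDomain_eq_add_single {f : α → β} {g : α →₀ ℕ} {V : β →₀ ℕ} {y : β}
    (h : g.mapDomain f = V + Finsupp.single y 1) :
    ∃ x g', f x = y ∧ g = g' + Finsupp.single x 1 ∧ g'.mapDomain f = V := by
  classical
  have hy : y ∈ (g.mapDomain f).support := by simp [h]
  obtain ⟨x, hx, rfl⟩ := Finset.mem_image.1 (Finsupp.mapDomain_support hy)
  have hle : Finsupp.single x 1 ≤ g :=
    Finsupp.single_le_iff.2 (Nat.one_le_iff_ne_zero.2 (Finsupp.mem_support_iff.1 hx))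
  obtain ⟨g', rfl⟩ := exists_add_of_le hle
  refine ⟨x, g', rfl, add_comm _ _, add_right_cancel (b := Finsupp.single (f x) 1) ?_⟩
  rw [← h, Finsupp.mapDomain_add, Finsupp.mapDomain_single, add_comm]

end Finsupp

section ShortThread

variable {Γ : Type*}

/-- A thread `(w, i)` whose stack `w ∈ Γ ∪ {ε}` has at most one symbol; as a type these are also the
stack symbols of the switch-number-recording DCFS. -/
abbrev ShortThread (Γ : Type*) := Option Γ × ℕ

/-- The local configuration `(w, i)` of `M` given by the short thread `(w, i)`. -/
def ShortThread.plain (x : ShortThread Γ) : List Γ × ℕ := (x.1.toList, x.2)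

/-- The local configuration `((w, i), i)` of `M'` given by the short thread `(w, i)`. -/
def ShortThread.record (x : ShortThread Γ) : List (ShortThread Γ) × ℕ := ([x], x.2)

theorem ShortThread.plain_injective : Function.Injective (plain (Γ := Γ)) := by
  rintro ⟨w, i⟩ ⟨v, j⟩ h
  cases w <;> cases v <;> simp_all [plain]

theorem ShortThread.record_injective : Function.Injective (record (Γ := Γ)) := fun _ _ h =>
  List.singleton_injective (congrArg Prod.fst h)

/-- The counterpart of `spawnOf` for short threads. -/
noncomputable def shortSpawnOf (α : Option Γ) (i : ℕ) : ShortThread Γ →₀ ℕ :=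
  α.elim 0 fun a => Finsupp.single (some a, i + 1) 1

theorem mapDomain_plain_shortSpawnOf (α : Option Γ) (i : ℕ) :
    (shortSpawnOf α i).mapDomain ShortThread.plain = spawnOf α i := by
  cases α <;> simp [shortSpawnOf, spawnOf, Finsupp.mapDomain_single, ShortThread.plain]

theorem mapDomain_record_shortSpawnOf (α : Option Γ) (i : ℕ) :
    (shortSpawnOf α i).mapDomain ShortThread.record =
      spawnOf (α.map fun a => (some a, i + 1)) i := by
  cases α <;> simp [shortSpawnOf, spawnOf, Finsupp.mapDomain_single, ShortThread.record]

end ShortThread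

section ShortConfig

variable {Q Γ Γ' : Type*}

/-- A configuration all of whose threads, active or pending, are short. -/
structure ShortConfig (Q Γ : Type*) where
  state : Q
  active : Option (ShortThread Γ)
  idle : ShortThread Γ →₀ ℕ

namespace ShortConfig

/-- The configuration obtained by reading every short thread as a local configuration via `f`. -/
noncomputable def toConfig (f : ShortThread Γ → List Γ' × ℕ) (a : ShortConfig Q Γ) : Config Q Γ' :=
  ⟨a.state, a.active.map f, a.idle.mapDomain f⟩

/-- The configuration of `M` represented by a short configuration. -/
noncomputable abbrev plain : ShortConfig Q Γ → Config Q Γ := toConfig ShortThread.plain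

/-- The configuration of `M'` represented by a short configuration. -/
noncomputable abbrev record : ShortConfig Q Γ → Config Q (ShortThread Γ) :=
  toConfig ShortThread.record

/-- The short configuration representing the initial configurations of both `M` and `M'`. -/
noncomputable def init (M : DCPS Q Γ) : ShortConfig Q Γ :=
  ⟨M.q0, none, Finsupp.single (some M.γ0, 0) 1⟩

theorem plain_init (M : DCPS Q Γ) : (init M).plain = initConfig M := by
  simp [init, initConfig, toConfig, ShortThread.plain, Finsupp.mapDomain_single]

theorem record_init (M : DCPS Q Γ) (k : ℕ) :
    (init M).record = initConfig (recordDCFS M k) := by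
  simp [init, initConfig, toConfig, recordDCFS, ShortThread.record, Finsupp.mapDomain_single]

theorem init_idle_mem_supported (M : DCPS Q Γ) (n : ℕ) :
    (init M).idle ∈ Finsupp.supported ℕ ℕ {x : ShortThread Γ | x.2 ≤ n} :=
  Finsupp.single_mem_supported _ _ (Nat.zero_le n)

theorem toConfig_idle_apply {f : ShortThread Γ → List Γ' × ℕ} (hf : Function.Injective f)
    (a : ShortConfig Q Γ) (x : ShortThread Γ) : (a.toConfig f).idle (f x) = a.idle x :=
  Finsupp.mapDomain_apply hf a.idle x

theorem eq_mk_some_of_record_eq {a : ShortConfig Q Γ} {q : Q} {x : ShortThread Γ}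
    {w : List (ShortThread Γ)} {i : ℕ} {V : (List (ShortThread Γ) × ℕ) →₀ ℕ}
    (h : a.record = ⟨q, some (x :: w, i), V⟩) :
    a = ⟨q, some x, a.idle⟩ ∧ w = [] ∧ i = x.2 ∧ V = a.idle.mapDomain ShortThread.record := by
  obtain ⟨q₀, act, g⟩ := a
  simp only [record, toConfig, Config.mk.injEq, Option.map_eq_some_iff] at h
  obtain ⟨rfl, ⟨y, rfl, hy⟩, rfl⟩ := h
  simp only [ShortThread.record, Prod.mk.injEq, List.cons.injEq] at hy
  obtain ⟨⟨rfl, rfl⟩, rfl⟩ := hy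
  exact ⟨rfl, rfl, rfl, rfl⟩

theorem eq_mk_none_of_record_eq {a : ShortConfig Q Γ} {q : Q} {x : ShortThread Γ}
    {w : List (ShortThread Γ)} {i : ℕ} {V : (List (ShortThread Γ) × ℕ) →₀ ℕ}
    (h : a.record = ⟨q, none, V + Finsupp.single (x :: w, i) 1⟩) :
    ∃ g, a = ⟨q, none, g + Finsupp.single x 1⟩ ∧ w = [] ∧ i = x.2 ∧
      V = g.mapDomain ShortThread.record := by
  obtain ⟨q₀, act, g⟩ := a
  simp only [record, toConfig, Config.mk.injEq, Option.map_eq_none_iff] at h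
  obtain ⟨rfl, rfl, hg⟩ := h
  obtain ⟨y, g', hy, rfl, rfl⟩ := exists_of_mapDomain_eq_add_single hg
  simp only [ShortThread.record, Prod.mk.injEq, List.cons.injEq] at hy
  obtain ⟨⟨rfl, rfl⟩, rfl⟩ := hy
  exact ⟨g', rfl, rfl, rfl, rfl⟩

end ShortConfig

end ShortConfig

section ShortStep

variable {Q Γ : Type*} {M : DCPS Q Γ} {k : ℕ}

theorem Step.rule_mem {r : Rule Q Γ} {c c' : Config Q Γ} (h : Step M r c c') : r ∈ M.rules := by
  cases h <;> assumption

theorem head?_toList_of_length_le_one {u : List Γ} (hu : u.length ≤ 1) : u.head?.toList = u := by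
  match u, hu with
  | [], _ => rfl
  | [_], _ => rfl

/-- The transition system on short configurations in which `M` acts with switch numbers at most `k`.
As in `liftRule`, a pushed word `u` of length at most one is represented by `u.head?`. -/
inductive ShortStep (M : DCPS Q Γ) (k : ℕ) : ShortConfig Q Γ → ShortConfig Q Γ → Prop
  | cr {q γ q' u α i V} : i ≤ k → Rule.cr q γ q' u α ∈ M.rules →
      ShortStep M k ⟨q, some (some γ, i), V⟩ ⟨q', some (u.head?, i), V + shortSpawnOf α i⟩
  | intr {q γ q' u i V} : i ≤ k → Rule.intr q γ q' u ∈ M.rules →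
      ShortStep M k ⟨q, some (some γ, i), V⟩
        ⟨q', none, V + Finsupp.single (u.head?, i + 1) 1⟩
  | res {q γ q' i V} : i ≤ k → Rule.res q γ q' ∈ M.rules →
      ShortStep M k ⟨q, none, V + Finsupp.single (some γ, i) 1⟩ ⟨q', some (some γ, i), V⟩

theorem ShortStep.of_step_record {a : ShortConfig Q Γ} {r : Rule Q (ShortThread Γ)}
    {c' : Config Q (ShortThread Γ)} (h : Step (recordDCFS M k) r a.record c') :
    ∃ b, ShortStep M k a b ∧ b.record = c' := by
  obtain ⟨i, hi, r, hr, rfl⟩ := h.rule_mem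
  generalize hc : a.record = c at h
  cases r with
  | cr q γ q' u α =>
    cases h
    obtain ⟨ha, rfl, rfl, rfl⟩ := ShortConfig.eq_mk_some_of_record_eq hc
    rw [ha]
    refine ⟨_, .cr hi hr, ?_⟩
    simp [ShortConfig.toConfig, Finsupp.mapDomain_add, mapDomain_record_shortSpawnOf,
      ShortThread.record]
  | intr q γ q' u =>
    cases h
    obtain ⟨ha, rfl, rfl, rfl⟩ := ShortConfig.eq_mk_some_of_record_eq hc
    rw [ha]
    refine ⟨_, .intr hi hr, ?_⟩
    simp [ShortConfig.toConfig, Finsupp.mapDomain_add, Finsupp.mapDomain_single,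
      ShortThread.record]
  | res q γ q' =>
    cases h
    obtain ⟨g, rfl, rfl, rfl, rfl⟩ := ShortConfig.eq_mk_none_of_record_eq hc
    exact ⟨_, .res hi hr, rfl⟩

theorem ShortStep.stepIn_plain (hM : IsDCFS M) {a b : ShortConfig Q Γ} (h : ShortStep M k a b) :
    ∃ r, StepIn M {i | i ≤ k} r a.plain b.plain := by
  cases h with
  | @cr q γ q' u α i V hi hr =>
    refine ⟨.cr q γ q' u α, ?_, .inl ⟨[γ], i, rfl, hi⟩⟩
    have hu : u.head?.toList = u := head?_toList_of_length_le_one (hM _ hr)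
    simpa [ShortConfig.toConfig, Finsupp.mapDomain_add, mapDomain_plain_shortSpawnOf,
      ShortThread.plain, hu] using Step.cr (w := []) (i := i) hr
  | @intr q γ q' u i V hi hr =>
    refine ⟨.intr q γ q' u, ?_, .inl ⟨[γ], i, rfl, hi⟩⟩
    have hu : u.head?.toList = u := head?_toList_of_length_le_one (hM _ hr)
    simpa [ShortConfig.toConfig, Finsupp.mapDomain_add, Finsupp.mapDomain_single,
      ShortThread.plain, hu] using Step.intr (w := []) (i := i) hr
  | @res q γ q' i V hi hr =>
    refine ⟨.res q γ q', ?_, .inr ⟨[γ], i, rfl, hi⟩⟩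
    simpa [ShortConfig.toConfig, Finsupp.mapDomain_add, Finsupp.mapDomain_single,
      ShortThread.plain] using Step.res (w := []) (i := i) hr

theorem shortSpawnOf_mem_supported (α : Option Γ) {i : ℕ} (hi : i ≤ k) :
    shortSpawnOf α i ∈ Finsupp.supported ℕ ℕ {x : ShortThread Γ | x.2 ≤ k + 1} := by
  cases α with
  | none => exact zero_mem _
  | some a => exact Finsupp.single_mem_supported _ _ (Nat.succ_le_succ hi)

theorem ShortStep.idle_mem_supported {a b : ShortConfig Q Γ} (h : ShortStep M k a b)
    (ha : a.idle ∈ Finsupp.supported ℕ ℕ {x : ShortThread Γ | x.2 ≤ k + 1}) :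
    b.idle ∈ Finsupp.supported ℕ ℕ {x : ShortThread Γ | x.2 ≤ k + 1} := by
  cases h with
  | cr hi _ => exact add_mem ha (shortSpawnOf_mem_supported _ hi)
  | intr hi _ => exact add_mem ha (Finsupp.single_mem_supported _ _ (Nat.succ_le_succ hi))
  | res => exact (Finset.coe_subset.2 (Finsupp.support_mono le_self_add)).trans ha

end ShortStep

section ShortReaches

variable {Q Γ : Type*} {M : DCPS Q Γ} {k : ℕ}

/-- Reachability in the transition system on short configurations. -/
def ShortReaches (M : DCPS Q Γ) (k : ℕ) : ShortConfig Q Γ → ShortConfig Q Γ → Prop :=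
  Relation.ReflTransGen (ShortStep M k)

theorem ShortReaches.of_reaches_record {a : ShortConfig Q Γ} {c' : Config Q (ShortThread Γ)}
    (h : Reaches (recordDCFS M k) a.record c') : ∃ b, ShortReaches M k a b ∧ b.record = c' := by
  induction h with
  | refl => exact ⟨a, .refl, rfl⟩
  | tail _ hstep ih =>
    obtain ⟨b, hab, rfl⟩ := ih
    obtain ⟨r, hr⟩ := hstep
    obtain ⟨d, hbd, rfl⟩ := ShortStep.of_step_record hr
    exact ⟨d, hab.tail hbd, rfl⟩

theorem ShortReaches.reachesIn_plain (hM : IsDCFS M) {a b : ShortConfig Q Γ}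
    (h : ShortReaches M k a b) : ReachesIn M {i | i ≤ k} a.plain b.plain :=
  h.lift ShortConfig.plain fun _ _ hstep => hstep.stepIn_plain hM

theorem ShortReaches.idle_mem_supported {a b : ShortConfig Q Γ} (h : ShortReaches M k a b)
    (ha : a.idle ∈ Finsupp.supported ℕ ℕ {x : ShortThread Γ | x.2 ≤ k + 1}) :
    b.idle ∈ Finsupp.supported ℕ ℕ {x : ShortThread Γ | x.2 ≤ k + 1} := by
  induction h with
  | refl => exact ha
  | tail _ hstep ih => exact hstep.idle_mem_supported ih

end ShortReaches

theorem bounded_simulates_record_general {Q Γ : Type*} {M : DCPS Q Γ} (hM : IsDCFS M) {k : ℕ}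
    {c' : Config Q (Option Γ × ℕ)}
    (hreach : Reaches (recordDCFS M k) (initConfig (recordDCFS M k)) c') :
    ∃ c : Config Q Γ,
      ReachesIn M {i | i ≤ k} (initConfig M) c ∧
      c.state = c'.state ∧
      (c'.active = none → c.active = none) ∧
      (∀ (w : Option Γ) (i : ℕ), c'.active = some ([(w, i)], i) → c.active = some (w.toList, i)) ∧
      (∀ (w : Option Γ) (j : ℕ), c.idle (w.toList, j) = c'.idle ([(w, j)], j)) ∧
      (∀ loc : List Γ × ℕ,
        (¬ ∃ (w : Option Γ) (j : ℕ), j ≤ k + 1 ∧ loc = (w.toList, j)) → c.idle loc = 0) := by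
  classical
  rw [← ShortConfig.record_init] at hreach
  obtain ⟨a, ha, rfl⟩ := ShortReaches.of_reaches_record hreach
  refine ⟨a.plain, ShortConfig.plain_init M ▸ ha.reachesIn_plain hM, rfl, ?_, ?_, ?_, ?_⟩
  · simp [ShortConfig.toConfig]
  · intro w i h
    obtain ⟨x, hx, hxw⟩ := Option.map_eq_some_iff.1 h
    obtain rfl : x = (w, i) := ShortThread.record_injective hxw
    exact congrArg (Option.map ShortThread.plain) hx
  · intro w j
    exact (a.toConfig_idle_apply ShortThread.plain_injective (w, j)).trans
      (a.toConfig_idle_apply ShortThread.record_injective (w, j)).symm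
  · intro loc hloc
    by_contra h
    obtain ⟨x, hx, rfl⟩ :=
      Finset.mem_image.1 (Finsupp.mapDomain_support (Finsupp.mem_support_iff.2 h))
    have hle : x.2 ≤ k + 1 :=
      ha.idle_mem_supported (ShortConfig.init_idle_mem_supported M (k + 1)) hx
    exact hloc ⟨x.1, x.2, hle, rfl⟩

/-- Every run of the switch-number-recording DCFS `M'` can be
simulated by a `[0,k]`-bounded run of the DCFS `M` reaching the corresponding
configuration. -/
theorem bounded_simulates_record
    (Q Γ : Type) [Fintype Q] [Fintype Γ] (M : DCPS Q Γ)
    (hfin : M.rules.Finite) (hdcfs : IsDCFS M) (k : ℕ)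
    (c' : Config Q (Option Γ × ℕ))
    (hreach : Reaches (recordDCFS M k) (initConfig (recordDCFS M k)) c') :
    ∃ c : Config Q Γ,
      ReachesIn M {i | i ≤ k} (initConfig M) c ∧
      c.state = c'.state ∧
      (c'.active = none → c.active = none) ∧
      (∀ (w : Option Γ) (i : ℕ), i ≤ k → c'.active = some ([(w, i)], i) →
        c.active = some (w.toList, i)) ∧
      (∀ (w' : Option Γ) (j' : ℕ), j' ≤ k + 1 →
        c.idle (w'.toList, j') = c'.idle ([(w', j')], j')) ∧
      (∀ loc : List Γ × ℕ,
        (¬ ∃ (w' : Option Γ) (j' : ℕ), j' ≤ k + 1 ∧ loc = (w'.toList, j')) →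
        c.idle loc = 0) := by
  obtain ⟨c, hc, hstate, hnone, hsome, hidle, hzero⟩ :=
    bounded_simulates_record_general hdcfs hreach
  exact ⟨c, hc, hstate, hnone, fun w i _ => hsome w i, fun w j _ => hidle w j, hzero⟩

end DCPSFormal
end

section
/- Let M=(Q,Γ,Δ,q₀,γ₀) be a DCFS with Γ={γ₀,…,γ_n}, V the VASS constructed from M, and μ the simulation map from configurations of M to configurations of V. If ((q₀,⊥),u₀)→*ς in T(V) via a run labelled by a word τ over Δ, and the state of ς lies in Q×((Γ∪{ε})∪{⊥}) (i.e., is not p_halt), then there is a configuration c of M with μ(c)=ς and c_init^M→*c in T(M) via a run labelled by the same word τ. -/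
namespace DCPSFormal

/-- States of the VASS constructed from a DCFS: either the halting state `p_halt`,
or a pair of a global state of the DCFS and the stack content of the active thread
(`none` = no active thread, `some w` with `w ∈ Γ ∪ {ε}` modelled as `Option Γ`). -/
inductive VState (Q Γ : Type*) where
  | halt : VState Q Γ
  | st : Q → Option (Option Γ) → VState Q Γ

/-- The counter coordinate associated with a stack content `w ∈ Γ ∪ {ε}`:
symbol `γ_j` gets coordinate `j` and `ε` gets the last coordinate. -/
def coordOf {n : ℕ} : Option (Fin (n + 1)) → Fin (n + 2)
  | some γ => γ.castSucc
  | none => Fin.last (n + 1)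

/-- The VASS constructed from a DCFS `M` over states `Q` and stack alphabet
`Γ = {γ₀,…,γ_n}` (modelled as `Fin (n+1)`); its dimension is `n + 2`, its alphabet is
the set of rules, and all remaining cases of the displacement function go to `p_halt`. -/
def vassOf {n : ℕ} {Q : Type*} [DecidableEq Q] (M : DCPS Q (Fin (n + 1)))
    [DecidablePred (· ∈ M.rules)] :
    VASS (n + 2) (VState Q (Fin (n + 1))) (Rule Q (Fin (n + 1))) where
  δ := fun s t =>
    match s, t with
    | .st q (some (some γ)), .cr q₁ γ₁ q' u α =>
        if Rule.cr q₁ γ₁ q' u α ∈ M.rules ∧ q₁ = q ∧ γ₁ = γ then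
          (.st q' (some u.head?),
            match α with
            | none => 0
            | some a => unitVec (coordOf (some a)))
        else (.halt, 0)
    | .st q (some (some γ)), .intr q₁ γ₁ q' u =>
        if Rule.intr q₁ γ₁ q' u ∈ M.rules ∧ q₁ = q ∧ γ₁ = γ then
          (.st q' none, unitVec (coordOf u.head?))
        else (.halt, 0)
    | .st q none, .res q₁ γ q' =>
        if Rule.res q₁ γ q' ∈ M.rules ∧ q₁ = q then
          (.st q' (some (some γ)), - unitVec (coordOf (some γ)))
        else (.halt, 0)
    | _, _ => (.halt, 0)
  s0 := .st M.q0 none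
  v0 := fun i => if i = coordOf (some M.γ0) then 1 else 0

/-- The number of pending threads of a configuration with a given stack content
(summed over all switch numbers). -/
noncomputable def countStack {Q Γ : Type*} [DecidableEq Γ] (c : Config Q Γ)
    (w : List Γ) : ℕ :=
  c.idle.sum fun loc m => if loc.1 = w then m else 0

/-- The simulation map `μ` from configurations of the DCFS `M` to configurations
of the VASS constructed from `M`. -/
noncomputable def muV {Q : Type*} {n : ℕ} (c : Config Q (Fin (n + 1))) :
    VState Q (Fin (n + 1)) × (Fin (n + 2) → ℕ) :=
  ((match c.active with
    | none => .st c.state none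
    | some (w, _) => .st c.state (some w.head?)),
   fun i => if h : (i : ℕ) < n + 1 then countStack c [⟨(i : ℕ), h⟩] else countStack c [])

/-!
Inside the VASS constructed from a DCFS, a step that avoids `p_halt` is a step of the DCFS seen
through `μ`: since pushed words have length at most one, the active stack never holds more than
one symbol, so its head determines it, and every pending thread created is counted by exactly one
counter. What `μ` forgets, the switch numbers, never blocks a rule: if the counter of `γ` is
positive then some pending thread has stack `γ`, and any such thread may be resumed. Runs can thus
be lifted along `μ` step by step.
-/

theorem LRun.exists_lift {C D L : Type*} {stepC : L → C → C → Prop} {stepD : L → D → D → Prop}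
    {R : C → D → Prop}
    (lift : ∀ {l c d d'}, R c d → stepD l d d' → ∃ c', stepC l c c' ∧ R c' d')
    {τ : List L} {c : C} {d d' : D} (hcd : R c d) (hrun : LRun stepD τ d d') :
    ∃ c', R c' d' ∧ LRun stepC τ c c' := by
  induction hrun generalizing c with
  | nil => exact ⟨c, hcd, .nil c⟩
  | cons hstep _ ih =>
    obtain ⟨c₁, hc₁, hR⟩ := lift hcd hstep
    obtain ⟨c', hc', hrun⟩ := ih hR
    exact ⟨c', hc', .cons hc₁ hrun⟩

theorem unitVec_apply {m : ℕ} (i j : Fin m) :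
    unitVec i j = ((Pi.single i 1 : Fin m → ℕ) j : ℤ) := by
  simp [unitVec, Pi.single_apply]

theorem coordOf_eq_finSuccEquivLast_symm {n : ℕ} (a : Option (Fin (n + 1))) :
    coordOf a = finSuccEquivLast.symm a := by
  cases a <;> simp [coordOf]

theorem countStack_eq_mapDomain {Q Γ : Type*} [DecidableEq Γ] (c : Config Q Γ) (w : List Γ) :
    countStack c w = c.idle.mapDomain Prod.fst w := by
  simp [countStack, Finsupp.mapDomain, Finsupp.sum_apply, Finsupp.single_apply]

theorem exists_eq_add_single_of_mapDomain_ne_zero {α β : Type*} {f : α → β} {V : α →₀ ℕ} {b : β}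
    (h : V.mapDomain f b ≠ 0) : ∃ a W, f a = b ∧ V = W + Finsupp.single a 1 := by
  classical
  obtain ⟨a, ha, rfl⟩ := Finset.mem_image.mp
    (Finsupp.mapDomain_support (Finsupp.mem_support_iff.mpr h))
  have hle : Finsupp.single a 1 ≤ V :=
    Finsupp.single_le_iff.mpr (Nat.one_le_iff_ne_zero.mpr (Finsupp.mem_support_iff.mp ha))
  exact ⟨a, V - Finsupp.single a 1, rfl, (tsub_add_cancel_of_le hle).symm⟩

theorem eq_toList_iff_eq_head? {α : Type*} {w : List α} (hw : w.length ≤ 1) (a : Option α) :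
    w = a.toList ↔ a = w.head? := by
  rcases w with _ | ⟨b, _ | ⟨b', w⟩⟩
  · cases a <;> simp
  · cases a <;> simp [eq_comm]
  · simp at hw

section Counters

variable {n : ℕ}

/-- The counter vector of a multiset of pending threads: the coordinate of `a ∈ Γ ∪ {ε}` counts the
threads with stack content `a`. Threads with a longer stack are not counted. -/
noncomputable def counters (V : (List (Fin (n + 1)) × ℕ) →₀ ℕ) (i : Fin (n + 2)) : ℕ :=
  V.mapDomain Prod.fst (finSuccEquivLast i).toList

theorem counters_coordOf (V : (List (Fin (n + 1)) × ℕ) →₀ ℕ) (a : Option (Fin (n + 1))) :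
    counters V (coordOf a) = V.mapDomain Prod.fst a.toList := by
  simp [counters, coordOf_eq_finSuccEquivLast_symm]

theorem counters_add (V W : (List (Fin (n + 1)) × ℕ) →₀ ℕ) :
    counters (V + W) = counters V + counters W := by
  ext i
  simp [counters, Finsupp.mapDomain_add]

theorem counters_single {w : List (Fin (n + 1))} (hw : w.length ≤ 1) (j : ℕ) :
    counters (Finsupp.single (w, j) 1) = Pi.single (coordOf w.head?) 1 := by
  ext i
  obtain ⟨a, rfl⟩ := finSuccEquivLast.symm.surjective i
  simp [counters, coordOf_eq_finSuccEquivLast_symm, Finsupp.mapDomain_single,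
    Finsupp.single_apply, Pi.single_apply, eq_toList_iff_eq_head? hw]

/-- The increment of the counter vector when a thread with stack content `α ∈ Γ` is spawned; the
case `α = ε` stands for no thread, not for a thread with empty stack. -/
def spawnVec (α : Option (Fin (n + 1))) : Fin (n + 2) → ℕ :=
  α.elim 0 fun a => Pi.single (coordOf (some a)) 1

theorem counters_spawnOf (α : Option (Fin (n + 1))) (i : ℕ) :
    counters (spawnOf α i) = spawnVec α := by
  cases α with
  | none => ext k; simp [counters, spawnOf, spawnVec]
  | some a => exact counters_single (by simp) (i + 1)

theorem muV_snd {Q : Type*} (c : Config Q (Fin (n + 1))) : (muV c).2 = counters c.idle := by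
  ext i
  cases i using Fin.lastCases <;> simp [muV, counters, countStack_eq_mapDomain, Fin.is_le]

theorem muV_idle {Q : Type*} (q : Q) (V : (List (Fin (n + 1)) × ℕ) →₀ ℕ) :
    muV ⟨q, none, V⟩ = (.st q none, counters V) :=
  Prod.ext rfl (muV_snd _)

theorem muV_active {Q : Type*} (q : Q) (w : List (Fin (n + 1))) (i : ℕ)
    (V : (List (Fin (n + 1)) × ℕ) →₀ ℕ) :
    muV ⟨q, some (w, i), V⟩ = (.st q (some w.head?), counters V) :=
  Prod.ext rfl (muV_snd _)

end Counters

section LiveSteps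

variable {n : ℕ} {Q : Type*}

/-- The steps of the VASS constructed from `M` that do not lead to `p_halt`, with displacements
written over `ℕ`. -/
inductive LiveStep (M : DCPS Q (Fin (n + 1))) : Rule Q (Fin (n + 1)) →
    VState Q (Fin (n + 1)) × (Fin (n + 2) → ℕ) →
    VState Q (Fin (n + 1)) × (Fin (n + 2) → ℕ) → Prop
  | cr {q γ q' u α v v'} :
      Rule.cr q γ q' u α ∈ M.rules → v' = v + spawnVec α →
      LiveStep M (.cr q γ q' u α) (.st q (some (some γ)), v) (.st q' (some u.head?), v')
  | intr {q γ q' u v v'} :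
      Rule.intr q γ q' u ∈ M.rules → v' = v + Pi.single (coordOf u.head?) 1 →
      LiveStep M (.intr q γ q' u) (.st q (some (some γ)), v) (.st q' none, v')
  | res {q γ q' v v'} :
      Rule.res q γ q' ∈ M.rules → v = v' + Pi.single (coordOf (some γ)) 1 →
      LiveStep M (.res q γ q') (.st q none, v) (.st q' (some (some γ)), v')

theorem LiveStep.fst_ne_halt {M : DCPS Q (Fin (n + 1))} {t : Rule Q (Fin (n + 1))}
    {p p' : VState Q (Fin (n + 1)) × (Fin (n + 2) → ℕ)} (h : LiveStep M t p p') :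
    p.1 ≠ .halt := by
  cases h <;> simp

variable [DecidableEq Q] {M : DCPS Q (Fin (n + 1))} [DecidablePred (· ∈ M.rules)]

theorem vassOf_δ_cr {q γ q' u α} (hr : Rule.cr q γ q' u α ∈ M.rules) :
    (vassOf M).δ (.st q (some (some γ))) (.cr q γ q' u α) =
      (.st q' (some u.head?), fun i => (spawnVec α i : ℤ)) := by
  cases α <;> ext <;> simp [vassOf, hr, spawnVec, unitVec_apply]

theorem vassOf_δ_intr {q γ q' u} (hr : Rule.intr q γ q' u ∈ M.rules) :
    (vassOf M).δ (.st q (some (some γ))) (.intr q γ q' u) =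
      (.st q' none, fun i => ((Pi.single (coordOf u.head?) 1 : Fin (n + 2) → ℕ) i : ℤ)) := by
  ext <;> simp [vassOf, hr, unitVec_apply]

theorem vassOf_δ_res {q γ q'} (hr : Rule.res q γ q' ∈ M.rules) :
    (vassOf M).δ (.st q none) (.res q γ q') =
      (.st q' (some (some γ)),
        fun i => -((Pi.single (coordOf (some γ)) 1 : Fin (n + 2) → ℕ) i : ℤ)) := by
  ext <;> simp [vassOf, hr, unitVec_apply]

theorem VStep.liveStep {t : Rule Q (Fin (n + 1))}
    {p p' : VState Q (Fin (n + 1)) × (Fin (n + 2) → ℕ)}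
    (h : VStep (vassOf M) t p p') (hp' : p'.1 ≠ .halt) : LiveStep M t p p' := by
  obtain ⟨s, v⟩ := p
  obtain ⟨s', v'⟩ := p'
  obtain ⟨rfl, hv⟩ := h
  have hs : ((vassOf M).δ s t).1 ≠ .halt := hp'
  simp only [vassOf] at hs
  split at hs
  · split_ifs at hs with hr
    · obtain ⟨hr, rfl, rfl⟩ := hr
      simp only [vassOf_δ_cr hr] at hv ⊢
      exact .cr hr (funext fun i => mod_cast hv i)
    · exact absurd rfl hs
  · split_ifs at hs with hr
    · obtain ⟨hr, rfl, rfl⟩ := hr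
      simp only [vassOf_δ_intr hr] at hv ⊢
      exact .intr hr (funext fun i => mod_cast hv i)
    · exact absurd rfl hs
  · split_ifs at hs with hr
    · obtain ⟨hr, rfl⟩ := hr
      simp only [vassOf_δ_res hr, ← sub_eq_add_neg, eq_sub_iff_add_eq] at hv ⊢
      exact .res hr (funext fun i => mod_cast (hv i).symm)
    · exact absurd rfl hs
  · exact absurd rfl hs

theorem LRun.liveStep {τ : List (Rule Q (Fin (n + 1)))}
    {p p' : VState Q (Fin (n + 1)) × (Fin (n + 2) → ℕ)}
    (hrun : LRun (VStep (vassOf M)) τ p p') (hp' : p'.1 ≠ .halt) :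
    LRun (LiveStep M) τ p p' := by
  suffices LRun (LiveStep M) τ p p' ∧ p.1 ≠ .halt from this.1
  induction hrun with
  | nil => exact ⟨.nil _, hp'⟩
  | cons hstep _ ih =>
    obtain ⟨hlive, hne⟩ := ih hp'
    exact ⟨.cons (hstep.liveStep hne) hlive, (hstep.liveStep hne).fst_ne_halt⟩

end LiveSteps

section Simulation

variable {n : ℕ} {Q : Type*}

/-- The stack of the active thread, if there is one, has at most one symbol. This is the invariant
of DCFS runs under which `muV` does not lose any part of the active stack. -/
def Config.IsShallow {Γ : Type*} (c : Config Q Γ) : Prop :=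
  ∀ t ∈ c.active, t.1.length ≤ 1

theorem exists_step_of_liveStep {M : DCPS Q (Fin (n + 1))} (hM : IsDCFS M)
    {t : Rule Q (Fin (n + 1))} {c : Config Q (Fin (n + 1))} (hc : c.IsShallow)
    {p : VState Q (Fin (n + 1)) × (Fin (n + 2) → ℕ)} (h : LiveStep M t (muV c) p) :
    ∃ c', Step M t c c' ∧ c'.IsShallow ∧ muV c' = p := by
  obtain ⟨q, _ | ⟨w, i⟩, V⟩ := c
  · rw [muV_idle] at h
    cases h with
    | @res _ γ q' _ v' hr hv =>
      have hpos : V.mapDomain Prod.fst [γ] ≠ 0 := by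
        simp [← Option.toList_some, ← counters_coordOf, hv]
      obtain ⟨⟨_, i⟩, W, rfl, rfl⟩ := exists_eq_add_single_of_mapDomain_ne_zero hpos
      have hW : counters W = v' := by
        rw [counters_add, counters_single (by simp)] at hv
        exact add_right_cancel hv
      exact ⟨_, .res hr, by simp [Config.IsShallow], by rw [muV_active, hW, List.head?_cons]⟩
  · have hw : w.length ≤ 1 := hc (w, i) rfl
    rw [muV_active] at h
    rcases w with _ | ⟨γ, _ | ⟨γ', w⟩⟩
    · cases h
    · cases h with
      | cr hr hv =>
        refine ⟨_, .cr hr, by simpa [Config.IsShallow] using hM _ hr, ?_⟩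
        rw [muV_active, counters_add, counters_spawnOf, List.append_nil, hv]
      | intr hr hv =>
        refine ⟨_, .intr hr, by simp [Config.IsShallow], ?_⟩
        rw [muV_idle, counters_add, List.append_nil, counters_single (hM _ hr), hv]
    · simp at hw

theorem muV_initConfig [DecidableEq Q] (M : DCPS Q (Fin (n + 1))) [DecidablePred (· ∈ M.rules)] :
    muV (initConfig M) = ((vassOf M).s0, (vassOf M).v0) := by
  rw [initConfig, muV_idle, counters_single (by simp)]
  ext i
  · rfl
  · simp [vassOf, Pi.single_apply]

theorem dcfs_simulates_vass_general [DecidableEq Q] (M : DCPS Q (Fin (n + 1)))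
    [DecidablePred (· ∈ M.rules)] (hM : IsDCFS M) {τ : List (Rule Q (Fin (n + 1)))}
    {ς : VState Q (Fin (n + 1)) × (Fin (n + 2) → ℕ)}
    (hrun : LRun (VStep (vassOf M)) τ ((vassOf M).s0, (vassOf M).v0) ς) (hς : ς.1 ≠ .halt) :
    ∃ c : Config Q (Fin (n + 1)), muV c = ς ∧ LRun (Step M) τ (initConfig M) c := by
  have hinit : (initConfig M).IsShallow := by simp [Config.IsShallow, initConfig]
  obtain ⟨c, ⟨-, hc⟩, hstep⟩ :=
    LRun.exists_lift (stepC := Step M) (R := fun c p => c.IsShallow ∧ muV c = p)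
      (fun ⟨hc, hp⟩ h => exists_step_of_liveStep hM hc (hp ▸ h))
      ⟨hinit, muV_initConfig M⟩ (hrun.liveStep hς)
  exact ⟨c, hc, hstep⟩

end Simulation

/-- Every run of the constructed VASS labelled by a word `τ` that does
not end in `p_halt` is simulated by a run of the DCFS `M` labelled by the same word,
ending in a configuration `c` with `μ(c) = ς`. -/
theorem dcfs_simulates_vass
    (n : ℕ) (Q : Type) [Fintype Q] [DecidableEq Q]
    (M : DCPS Q (Fin (n + 1))) [DecidablePred (· ∈ M.rules)]
    (hfin : M.rules.Finite) (hdcfs : IsDCFS M)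
    (τ : List (Rule Q (Fin (n + 1))))
    (ς : VState Q (Fin (n + 1)) × (Fin (n + 2) → ℕ))
    (hrun : LRun (VStep (vassOf M)) τ ((vassOf M).s0, (vassOf M).v0) ς)
    (hnothalt : ς.1 ≠ .halt) :
    ∃ c : Config Q (Fin (n + 1)), muV c = ς ∧ LRun (Step M) τ (initConfig M) c := by
  exact dcfs_simulates_vass_general M hdcfs hrun hnothalt

end DCPSFormal
end
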